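/- Let g ∈ GL(V), V finite-dimensional, with Jordan decomposition g = e h u. Then the chain recurrent set of the induced flow on ℙ(V) equals the fixed-point set of the induced flow of the hyperbolic part: R_C(g) = fix(h) = ⋃_i ℙ(V_{λ_i}), where V_{λ_i} are the eigenspaces of h; and each ℙ(V_{λ_i}) is chain transitive, so {ℙ(V_{λ_i})} is the finest Morse decomposition. -/

import Mathlib

open Filter Topology LinearAlgebra.Projectivization

instance projectivizationTopology {K V : Type*} [DivisionRing K] [AddCommGroup V]
    [Module K V] [TopologicalSpace V] : TopologicalSpace (ℙ K V) :=
  instTopologicalSpaceQuotient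

/-- The flow induced on projective space by iterating a linear automorphism. -/
def projFlow {K V : Type*} [Field K] [AddCommGroup V] [Module K V]
    (g : V ≃ₗ[K] V) (t : ℤ) : ℙ K V → ℙ K V :=
  Projectivization.map ((g ^ t : V ≃ₗ[K] V) : V →ₗ[K] V) (g ^ t).injective

/-- An `(ε, T)`-chain from `x` to `y` for a discrete-time flow `φ`, with respect to the
distance function `d`. -/
def IsChainZ {P : Type*} (d : P → P → ℝ) (φ : ℤ → P → P) (ε : ℝ) (T : ℤ) (x y : P) : Prop :=
  ∃ n : ℕ, ∃ xs : Fin (n + 2) → P, ∃ ts : Fin (n + 1) → ℤ,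
    xs 0 = x ∧ xs (Fin.last (n + 1)) = y ∧
    ∀ i : Fin (n + 1), T ≤ ts i ∧ d (φ (ts i) (xs i.castSucc)) (xs i.succ) < ε

/-!
On an eigenspace of `h` the flow of `g` on lines is that of `e * u`. The powers of `e` are bounded,
so they return to the identity along some sequence of times; those of `u` are polynomial in
time, so the leading term drives `[u ^ t v]` and `[u ^ (-t) v]` to the same line. Hence a chain
starting at a line `x` of the eigenspace can jump from `g ^ t x` to `g ^ (-t) x` for arbitrarily
large `t`, flow back to `x`, and jump to any line close to `x`; connectedness of the projectivized
eigenspace does the rest.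

For a line in no eigenspace, some index `i` splits `V` into the sum `A` of the eigenspaces for
`l k ≥ l i` and the sum `B` of the others so that the line lies in neither. Since `A` dominates `B`,
iterating `g` shrinks the cone around `A` whose boundary contains the line into a strictly smaller
one, and chains that enter it cannot come back.
-/

section Chains

variable {P : Type*}

/-- One step of an `(ε, T)`-chain: follow the flow for a time at least `T`, then jump by less
than `ε`. -/
def ChainStep (d : P → P → ℝ) (φ : ℤ → P → P) (ε : ℝ) (T : ℤ) (x y : P) : Prop :=
  ∃ t : ℤ, T ≤ t ∧ d (φ t x) y < ε

theorem isChainZ_iff_transGen {d : P → P → ℝ} {φ : ℤ → P → P} {ε : ℝ} {T : ℤ} {x y : P} :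
    IsChainZ d φ ε T x y ↔ Relation.TransGen (ChainStep d φ ε T) x y := by
  constructor
  · rintro ⟨n, xs, ts, rfl, rfl, hstep⟩
    have reach (i : Fin (n + 1)) :
        Relation.TransGen (ChainStep d φ ε T) (xs 0) (xs i.succ) := by
      induction i using Fin.induction with
      | zero => exact .single ⟨ts 0, hstep 0⟩
      | succ i ih =>
        exact ih.tail ⟨ts i.succ, hstep i.succ⟩
    exact reach (Fin.last n)
  · intro hxy
    induction hxy using Relation.TransGen.head_induction_on with
    | @single a hay =>
      obtain ⟨t, ht⟩ := hay
      refine ⟨0, ![a, y], ![t], rfl, rfl, fun i => ?_⟩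
      rw [Fin.fin_one_eq_zero i]
      exact ht
    | @head a b hab _ ih =>
      obtain ⟨t, ht⟩ := hab
      obtain ⟨n, xs, ts, rfl, rfl, hstep⟩ := ih
      refine ⟨n + 1, Fin.cons a xs, Fin.cons t ts, rfl, ?_, fun i => ?_⟩
      · rw [← Fin.succ_last, Fin.cons_succ]
      · cases i using Fin.cases with
        | zero => exact ht
        | succ i => exact hstep i

/-- The orbit of `x` returns to `w` along the same times in the past and in the future. -/
def IsTwoSidedLimit [TopologicalSpace P] (φ : ℤ → P → P) (x w : P) : Prop :=
  ∃ ψ : ℕ → ℕ, Tendsto ψ atTop atTop ∧ Tendsto (fun n => φ (ψ n) x) atTop (𝓝 w) ∧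
    Tendsto (fun n => φ (-ψ n) x) atTop (𝓝 w)

/-- A compact trap for the flow after time `T`, which `x` enters but does not belong to: the
open neighbourhood `O` of the compact set `K` is mapped into `K`, and so is `x ∉ O`. -/
def EntersTrap [TopologicalSpace P] (φ : ℤ → P → P) (T : ℤ) (x : P) : Prop :=
  ∃ K O : Set P, IsCompact K ∧ IsOpen O ∧ K ⊆ O ∧ x ∉ O ∧
    ∀ t, T ≤ t → Set.MapsTo (φ t) (insert x O) K

variable [PseudoMetricSpace P] {φ : ℤ → P → P} {ε : ℝ} {T : ℤ} {x y w : P}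

theorem IsTwoSidedLimit.isChainZ (hφ : ∀ t x, φ t (φ (-t) x) = x) (hx : IsTwoSidedLimit φ x w)
    (hxy : dist x y < ε) : IsChainZ dist φ ε T x y := by
  obtain ⟨ψ, hψ, hfwd, hbwd⟩ := hx
  have hε : 0 < ε := dist_nonneg.trans_lt hxy
  have hclose : ∀ᶠ n in atTop, dist (φ (ψ n) x) (φ (-ψ n) x) < ε :=
    (hfwd.dist hbwd).eventually_lt_const ((dist_self w).trans_lt hε)
  have hlarge : ∀ᶠ n in atTop, T ≤ (ψ n : ℤ) :=
    (tendsto_natCast_atTop_atTop.comp hψ).eventually_ge_atTop T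
  obtain ⟨n, hn, hTn⟩ := (hclose.and hlarge).exists
  refine isChainZ_iff_transGen.2 (.tail (.single ⟨ψ n, hTn, hn⟩) ⟨ψ n, hTn, ?_⟩)
  rwa [hφ]

theorem isChainZ_of_isPreconnected {S : Set P} (hS : IsPreconnected S)
    (hφ : ∀ t x, φ t (φ (-t) x) = x) (hlim : ∀ x ∈ S, ∃ w, IsTwoSidedLimit φ x w) (hε : 0 < ε)
    (hx : x ∈ S) (hy : y ∈ S) : IsChainZ dist φ ε T x y := by
  refine hS.induction₂' (IsChainZ dist φ ε T) (fun a ha => ?_) (fun a b c _ _ _ hab hbc => ?_)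
    hx hy
  · filter_upwards [self_mem_nhdsWithin, nhdsWithin_le_nhds (Metric.ball_mem_nhds a hε)]
      with b hb hba
    obtain ⟨_, hwa⟩ := hlim a ha
    obtain ⟨_, hwb⟩ := hlim b hb
    exact ⟨hwa.isChainZ hφ (Metric.mem_ball'.1 hba), hwb.isChainZ hφ (Metric.mem_ball.1 hba)⟩
  · exact isChainZ_iff_transGen.2
      ((isChainZ_iff_transGen.1 hab).trans (isChainZ_iff_transGen.1 hbc))

theorem EntersTrap.exists_not_isChainZ (hx : EntersTrap φ T x) :
    ∃ ε > 0, ¬ IsChainZ dist φ ε T x x := by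
  obtain ⟨K, O, hK, hO, hKO, hxO, htrap⟩ := hx
  obtain ⟨ε, hε, hthick⟩ := hK.exists_thickening_subset_open hO hKO
  refine ⟨ε, hε, fun hchain => ?_⟩
  have hstep {a b : P} (ha : a ∈ insert x O) : ChainStep dist φ ε T a b → b ∈ O := by
    rintro ⟨t, ht, hab⟩
    exact hthick (Metric.mem_thickening_iff.2 ⟨φ t a, htrap t ht ha, by rwa [dist_comm]⟩)
  have hreach {b : P} (hb : Relation.TransGen (ChainStep dist φ ε T) x b) : b ∈ O := by
    induction hb with
    | single hxb => exact hstep (Set.mem_insert x O) hxb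
    | tail _ hbc ih => exact hstep (Set.mem_insert_of_mem x ih) hbc
  exact hxO (hreach (isChainZ_iff_transGen.1 hchain))

end Chains

section Algebra

theorem exists_notMem_biSup_Iic_and_notMem_biSup_Ioi {ι R M : Type*} [LinearOrder ι] [Ring R]
    [AddCommGroup M] [Module R M] {E : ι → Submodule R M} (hind : iSupIndep E)
    (htop : ⨆ k, E k = ⊤) {v : M} (hv : v ≠ 0) (hvE : ∀ k, v ∉ E k) :
    ∃ i, v ∉ ⨆ k ∈ Set.Iic i, E k ∧ v ∉ ⨆ k ∈ Set.Ioi i, E k := by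
  classical
  let := (DirectSum.isInternal_submodule_of_iSupIndep_of_iSup_eq_top hind htop).chooseDecomposition
  have component_eq_zero {s : Set ι} {j : ι} (hj : j ∉ s) {x : M} (hx : x ∈ ⨆ k ∈ s, E k) :
      DirectSum.decompose E x j = 0 := by
    let component := DirectSum.component R ι (fun k => E k) j ∘ₗ
      (DirectSum.decomposeLinearEquiv E).toLinearMap
    suffices ⨆ k ∈ s, E k ≤ LinearMap.ker component from this hx
    refine iSup₂_le fun k hk y hy => Subtype.ext ?_
    exact DirectSum.decompose_of_mem_ne E hy fun hkj => hj (hkj ▸ hk)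
  have hne : (DirectSum.decompose E v).support.Nonempty := by
    rw [Finset.nonempty_iff_ne_empty, Ne, DFinsupp.support_eq_empty]
    exact fun h0 => hv (by simpa using congrArg (DirectSum.decompose E).symm h0)
  let i := (DirectSum.decompose E v).support.min' hne
  refine ⟨i, fun hle => hvE i ?_, fun hlt => ?_⟩
  · have hsupp : ∀ j ∈ (DirectSum.decompose E v).support, j = i := fun j hj =>
      le_antisymm (not_lt.1 fun hij => DFinsupp.mem_support_iff.1 hj
        (component_eq_zero (by simpa using hij) hle)) (Finset.min'_le _ j hj)
    rw [← DirectSum.sum_support_decompose E v]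
    exact sum_mem fun j hj => hsupp j hj ▸ Subtype.prop _
  · exact DFinsupp.mem_support_iff.1 (Finset.min'_mem _ hne)
      (component_eq_zero (lt_irrefl i) hlt)

theorem isCompl_biSup_Iic_biSup_Ioi {ι α : Type*} [LinearOrder ι] [CompleteLattice α]
    [IsModularLattice α] [IsCompactlyGenerated α] {E : ι → α} (hind : iSupIndep E)
    (htop : ⨆ k, E k = ⊤) (i : ι) :
    IsCompl (⨆ k ∈ Set.Iic i, E k) (⨆ k ∈ Set.Ioi i, E k) := by
  refine ⟨hind.disjoint_biSup_biSup (Set.Iic_disjoint_Ioi le_rfl), ?_⟩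
  rw [codisjoint_iff_le_sup, ← htop]
  refine iSup_le fun k => ?_
  rcases le_or_gt k i with hki | hik
  · exact le_sup_of_le_left (le_biSup E hki)
  · exact le_sup_of_le_right (le_biSup E hik)

theorem commute_of_commute_toLinearMap {R M : Type*} [Semiring R] [AddCommMonoid M] [Module R M]
    {f g : M ≃ₗ[R] M} (hfg : Commute (f : M →ₗ[R] M) (g : M →ₗ[R] M)) : Commute f g :=
  .of_map (f := LinearEquiv.automorphismGroup.toLinearMapMonoidHom)
    LinearEquiv.toLinearMap_injective hfg

variable {K V : Type*} [Field K] [AddCommGroup V] [Module K V]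

theorem zpow_apply_of_apply_eq_smul {f : V ≃ₗ[K] V} {μ : K} {v : V} (hv : f v = μ • v) (t : ℤ) :
    (f ^ t) v = μ ^ t • v := by
  rcases eq_or_ne v 0 with rfl | hv0
  · rw [map_zero, smul_zero]
  have hμ : μ ≠ 0 := by
    rintro rfl
    exact hv0 (f.map_eq_zero_iff.1 (hv.trans (zero_smul K v)))
  have hinv : f⁻¹ v = μ⁻¹ • v :=
    f.symm_apply_eq.2 (by rw [map_smul, hv, inv_smul_smul₀ hμ])
  induction t with
  | zero => simp
  | succ n ih => rw [zpow_add_one, LinearEquiv.mul_apply, hv, map_smul, ih, smul_smul,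
      zpow_add_one₀ hμ, mul_comm]
  | pred n ih => rw [zpow_sub_one, LinearEquiv.mul_apply, hinv, map_smul, ih, smul_smul,
      zpow_sub_one₀ hμ, mul_comm]

theorem mem_eigenspace_inv {f : V ≃ₗ[K] V} {μ : K} {v : V}
    (hv : v ∈ Module.End.eigenspace (f : V →ₗ[K] V) μ) :
    v ∈ Module.End.eigenspace ((f⁻¹ : V ≃ₗ[K] V) : V →ₗ[K] V) μ⁻¹ := by
  rw [Module.End.mem_eigenspace_iff] at hv ⊢
  simpa using zpow_apply_of_apply_eq_smul hv (-1)

theorem exists_eq_of_iSup_eigenspace_eq_top {ι : Type*} {f : Module.End K V} {l : ι → K}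
    (htop : ⨆ k, f.eigenspace (l k) = ⊤) {a : K} {v : V} (hv : v ≠ 0) (hva : v ∈ f.eigenspace a) :
    ∃ k, l k = a := by
  by_contra! hla
  have hle : ⊤ ≤ ⨆ b ≠ a, f.eigenspace b :=
    htop ▸ iSup_le fun k => le_biSup f.eigenspace (hla k)
  exact hv (Submodule.disjoint_def.1 (f.eigenspaces_iSupIndep a) v hva (hle trivial))

end Algebra

section ProjectiveSpace

variable {K V : Type*} [Field K] [AddCommGroup V] [Module K V]

theorem projFlow_eq_mk (g : V ≃ₗ[K] V) (t : ℤ) (p : ℙ K V) :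
    projFlow g t p =
      .mk K ((g ^ t) p.rep) ((g ^ t).map_ne_zero_iff.2 p.rep_nonzero) := by
  conv_lhs => rw [← p.mk_rep]
  rfl

theorem projFlow_apply_neg (g : V ≃ₗ[K] V) (t : ℤ) (p : ℙ K V) :
    projFlow g t (projFlow g (-t) p) = p := by
  induction p using Projectivization.ind with
  | h v hv =>
    have hcancel : (g ^ t) ((g ^ (-t)) v) = v := by
      rw [zpow_neg]
      exact (g ^ t).apply_symm_apply v
    exact (Projectivization.mk_eq_mk_iff' K _ _ _ _).2 ⟨1, (one_smul K v).trans hcancel.symm⟩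

theorem forall_projFlow_eq_iff {h : V ≃ₗ[K] V} {p : ℙ K V} :
    (∀ t : ℤ, projFlow h t p = p) ↔
      ∃ a, p.rep ∈ Module.End.eigenspace (h : V →ₗ[K] V) a := by
  have mk_eq_iff (t : ℤ) : projFlow h t p = p ↔ ∃ a : K, a • p.rep = (h ^ t) p.rep := by
    rw [projFlow_eq_mk, ← Projectivization.mk_eq_mk_iff' K _ _ _ p.rep_nonzero, p.mk_rep]
  simp only [mk_eq_iff, Module.End.mem_eigenspace_iff]
  refine ⟨fun hfix => ?_, fun ⟨a, ha⟩ t => ⟨a ^ t, (zpow_apply_of_apply_eq_smul ha t).symm⟩⟩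
  obtain ⟨a, ha⟩ := hfix 1
  exact ⟨a, by simpa using ha.symm⟩

theorem setOf_forall_projFlow_eq {ι : Type*} {h : V ≃ₗ[K] V} {l : ι → K}
    (htop : ⨆ k, Module.End.eigenspace (h : V →ₗ[K] V) (l k) = ⊤) :
    {p : ℙ K V | ∀ t : ℤ, projFlow h t p = p} =
      ⋃ k, {p | p.rep ∈ Module.End.eigenspace (h : V →ₗ[K] V) (l k)} := by
  ext p
  simp only [Set.mem_ofPred_eq, Set.mem_iUnion, forall_projFlow_eq_iff]
  refine ⟨fun ⟨a, ha⟩ => ?_, fun ⟨k, hk⟩ => ⟨l k, hk⟩⟩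
  obtain ⟨k, rfl⟩ := exists_eq_of_iSup_eigenspace_eq_top htop p.rep_nonzero ha
  exact ⟨k, ha⟩

theorem rep_mk_mem_iff {s : Set V} (hs : ∀ (a : Kˣ), ∀ x ∈ s, a • x ∈ s) {v : V} (hv : v ≠ 0) :
    (Projectivization.mk K v hv).rep ∈ s ↔ v ∈ s := by
  obtain ⟨a, ha⟩ := Projectivization.exists_smul_eq_mk_rep K v hv
  rw [← ha]
  exact ⟨fun hav => by simpa using hs a⁻¹ _ hav, hs a v⟩

variable [TopologicalSpace V]

theorem isQuotientMap_mk' : IsQuotientMap (Projectivization.mk' K : {v : V // v ≠ 0} → ℙ K V) :=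
  isQuotientMap_quotient_mk'

theorem isOpen_setOf_rep_mem {s : Set V} (hs : ∀ (a : Kˣ), ∀ x ∈ s, a • x ∈ s) (hopen : IsOpen s) :
    IsOpen {p : ℙ K V | p.rep ∈ s} := by
  rw [← isQuotientMap_mk'.isOpen_preimage]
  convert hopen.preimage continuous_subtype_val using 1
  ext v
  exact rep_mk_mem_iff hs v.2

theorem isClosed_setOf_rep_mem {s : Set V} (hs : ∀ (a : Kˣ), ∀ x ∈ s, a • x ∈ s)
    (hclosed : IsClosed s) : IsClosed {p : ℙ K V | p.rep ∈ s} := by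
  rw [← isQuotientMap_mk'.isClosed_preimage]
  convert hclosed.preimage continuous_subtype_val using 1
  ext v
  exact rep_mk_mem_iff hs v.2

theorem tendsto_mk_of_tendsto_smul [T1Space V] {α : Type*} {F : Filter α} {a : α → K} {y : α → V}
    (hy : ∀ n, y n ≠ 0) {w : V} (hw : w ≠ 0) (hlim : Tendsto (fun n => a n • y n) F (𝓝 w)) :
    Tendsto (fun n => Projectivization.mk K (y n) (hy n)) F (𝓝 (.mk K w hw)) := by
  intro U hU
  have hpre : Projectivization.mk' K ⁻¹' U ∈ 𝓝 (⟨w, hw⟩ : {v : V // v ≠ 0}) :=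
    isQuotientMap_mk'.continuous.continuousAt hU
  obtain ⟨S, hS, hSU⟩ := mem_nhds_subtype _ _ _ |>.1 hpre
  rw [Filter.mem_map]
  filter_upwards [hlim hS, hlim.eventually_ne hw] with n hn hne
  have hmk : Projectivization.mk K (y n) (hy n) = .mk K (a n • y n) hne :=
    ((Projectivization.mk_eq_mk_iff' K _ _ _ _).2 ⟨a n, rfl⟩).symm
  rw [Set.mem_preimage, hmk]
  exact hSU (a := ⟨_, hne⟩) hn

end ProjectiveSpace

section RealProjectiveSpace

variable {V : Type*} [NormedAddCommGroup V] [NormedSpace ℝ V]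

theorem isPreconnected_setOf_rep_mem (W : Submodule ℝ V) :
    IsPreconnected {p : ℙ ℝ V | p.rep ∈ W} := by
  refine isPreconnected_of_forall_pair fun p hp q hq => ?_
  rcases eq_or_ne p q with rfl | hpq
  · exact ⟨{p}, by simpa using hp, rfl, rfl, isPreconnected_singleton⟩
  have hind : ∀ a b : ℝ, a • p.rep + b • q.rep = 0 → a = 0 ∧ b = 0 :=
    LinearIndependent.pair_iff.1 (Projectivization.linearIndependent_pair_iff_ne.2 hpq)
  have hne (s : ℝ) : (1 - s) • p.rep + s • q.rep ≠ 0 := fun h0 => by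
    obtain ⟨h1, h2⟩ := hind _ _ h0
    linarith
  let segment : ℝ → ℙ ℝ V := fun s => .mk ℝ ((1 - s) • p.rep + s • q.rep) (hne s)
  have hcont : Continuous segment := isQuotientMap_mk'.continuous.comp
    (Continuous.subtype_mk (p := fun v : V => v ≠ 0) (by fun_prop) hne)
  refine ⟨Set.range segment, ?_, ⟨0, ?_⟩, ⟨1, ?_⟩, isPreconnected_range hcont⟩
  · rintro _ ⟨s, rfl⟩
    exact (rep_mk_mem_iff (s := (W : Set V)) (fun a x hx => W.smul_mem (a : ℝ) hx) _).2
      (W.add_mem (W.smul_mem _ hp) (W.smul_mem _ hq))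
  · simp [segment]
  · simp [segment]

theorem compactSpace_projectivization [FiniteDimensional ℝ V] : CompactSpace (ℙ ℝ V) := by
  have : ProperSpace V := FiniteDimensional.proper_real V
  have hne (v : Metric.sphere (0 : V) 1) : (v : V) ≠ 0 := ne_zero_of_mem_unit_sphere v
  let toProj : Metric.sphere (0 : V) 1 → ℙ ℝ V := fun v => .mk ℝ v (hne v)
  have hcont : Continuous toProj :=
    isQuotientMap_mk'.continuous.comp (Continuous.subtype_mk continuous_subtype_val hne)
  have hsurj : Function.Surjective toProj := fun p =>
    ⟨⟨‖p.rep‖⁻¹ • p.rep, by simp [norm_smul, p.rep_nonzero]⟩, by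
      refine Eq.trans ?_ p.mk_rep
      exact (Projectivization.mk_eq_mk_iff' ℝ _ _ _ _).2 ⟨‖p.rep‖⁻¹, rfl⟩⟩
  exact hsurj.compactSpace hcont

end RealProjectiveSpace

section Unipotent

variable {R M : Type*} [Ring R] [AddCommGroup M] [Module R M]

theorem add_one_pow_apply_eq_sum {N : Module.End R M} {v : M} {d : ℕ} (hd : (N ^ d) v = 0)
    (t : ℕ) :
    ((N + 1) ^ t) v = ∑ i ∈ Finset.range d, t.choose i • (N ^ i) v := by
  have hlarge : ∀ i, d ≤ i → (N ^ i) v = 0 := fun i hi => by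
    rw [← Nat.sub_add_cancel hi, pow_add, Module.End.mul_apply, hd, map_zero]
  have hbinom : ((N + 1) ^ t) v = ∑ i ∈ Finset.range (t + 1), t.choose i • (N ^ i) v := by
    simp only [(Commute.one_right N).add_pow, one_pow, mul_one, LinearMap.sum_apply,
      ← Nat.cast_comm, ← nsmul_eq_mul, LinearMap.smul_apply]
  calc ((N + 1) ^ t) v = ∑ i ∈ Finset.range (t + 1), t.choose i • (N ^ i) v := hbinom
    _ = ∑ i ∈ Finset.range (max (t + 1) d), t.choose i • (N ^ i) v :=
      Finset.sum_subset (Finset.range_mono (le_max_left _ _)) fun i _ hi => by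
        rw [Nat.choose_eq_zero_of_lt (by simpa using hi), zero_smul]
    _ = ∑ i ∈ Finset.range d, t.choose i • (N ^ i) v :=
      (Finset.sum_subset (Finset.range_mono (le_max_right _ _)) fun i _ hi => by
        rw [hlarge i (by simpa using hi), smul_zero]).symm

theorem exists_pow_apply_ne_zero_and_pow_succ_apply_eq_zero {N : Module.End R M}
    (hN : IsNilpotent N) {v : M} (hv : v ≠ 0) : ∃ k, (N ^ k) v ≠ 0 ∧ (N ^ (k + 1)) v = 0 := by
  by_contra! hsucc
  have hall (k : ℕ) : (N ^ k) v ≠ 0 := by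
    induction k with
    | zero => simpa using hv
    | succ k ih => exact hsucc k ih
  obtain ⟨d, hd⟩ := hN
  exact hall d (by rw [hd, LinearMap.zero_apply])

theorem pow_apply_eq_sub_one_add_one_pow_apply (u : M ≃ₗ[R] M) (t : ℕ) (v : M) :
    (u ^ t) v = (((u : Module.End R M) - 1 + 1) ^ t) v := by
  rw [sub_add_cancel, Module.End.pow_apply, LinearEquiv.pow_apply]
  rfl

theorem inv_sub_one_pow (u : M ≃ₗ[R] M) (j : ℕ) :
    (((u⁻¹ : M ≃ₗ[R] M) : Module.End R M) - 1) ^ j =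
      (-1) ^ j * (((u⁻¹ : M ≃ₗ[R] M) : Module.End R M) ^ j * ((u : Module.End R M) - 1) ^ j) := by
  set a := (u : Module.End R M)
  set b := ((u⁻¹ : M ≃ₗ[R] M) : Module.End R M)
  have hab : a * b = 1 := LinearMap.ext u.apply_symm_apply
  have hba : b * a = 1 := LinearMap.ext u.symm_apply_apply
  have hcomm : Commute b (a - 1) := by
    rw [Commute, SemiconjBy, mul_sub, sub_mul, hab, hba, mul_one, one_mul]
  have hsub : b - 1 = -(b * (a - 1)) := by rw [mul_sub, hba, mul_one, neg_sub]
  rw [hsub, neg_pow, hcomm.mul_pow]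

theorem isNilpotent_inv_sub_one {u : M ≃ₗ[R] M} (hu : IsNilpotent ((u : Module.End R M) - 1)) :
    IsNilpotent (((u⁻¹ : M ≃ₗ[R] M) : Module.End R M) - 1) := by
  obtain ⟨d, hd⟩ := hu
  exact ⟨d, by rw [inv_sub_one_pow, hd, mul_zero, mul_zero]⟩

theorem inv_sub_one_pow_succ_apply_eq_zero {u : M ≃ₗ[R] M} {v : M} {k : ℕ}
    (hk : (((u : Module.End R M) - 1) ^ (k + 1)) v = 0) :
    ((((u⁻¹ : M ≃ₗ[R] M) : Module.End R M) - 1) ^ (k + 1)) v = 0 := by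
  rw [inv_sub_one_pow, Module.End.mul_apply, Module.End.mul_apply, hk, map_zero, map_zero]

theorem inv_sub_one_pow_apply {u : M ≃ₗ[R] M} {v : M} {k : ℕ}
    (hk : (((u : Module.End R M) - 1) ^ (k + 1)) v = 0) :
    ((((u⁻¹ : M ≃ₗ[R] M) : Module.End R M) - 1) ^ k) v =
      (-1 : R) ^ k • (((u : Module.End R M) - 1) ^ k) v := by
  set x := (((u : Module.End R M) - 1) ^ k) v with hx
  have hfix : u x = x := by
    rw [pow_succ', Module.End.mul_apply] at hk
    exact sub_eq_zero.1 hk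
  have hinv : Function.IsFixedPt (u⁻¹ : M ≃ₗ[R] M) x := u.symm_apply_eq.2 hfix.symm
  have hinvpow : (((u⁻¹ : M ≃ₗ[R] M) : Module.End R M) ^ k) x = x := by
    rw [Module.End.pow_apply]
    exact hinv.iterate k
  have hsign : ((-1 : Module.End R M) ^ k) x = (-1 : R) ^ k • x := by
    rcases k.even_or_odd with hk | hk <;> simp [hk.neg_one_pow]
  rw [inv_sub_one_pow, Module.End.mul_apply, Module.End.mul_apply, ← hx, hinvpow, hsign]

theorem tendsto_choose_div_pow_atTop_zero {i k : ℕ} (hik : i < k) :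
    Tendsto (fun t : ℕ => (t.choose i : ℝ) / (t : ℝ) ^ k) atTop (𝓝 0) := by
  have hpow : Tendsto (fun t : ℕ => (t : ℝ) ^ i / (t : ℝ) ^ k) atTop (𝓝 0) :=
    (tendsto_pow_div_pow_atTop_zero hik).comp tendsto_natCast_atTop_atTop
  refine squeeze_zero (fun t => by positivity) (fun t => ?_) hpow
  gcongr
  exact_mod_cast Nat.choose_le_pow t i

theorem tendsto_choose_div_pow_atTop_inv_factorial (k : ℕ) :
    Tendsto (fun t : ℕ => (t.choose k : ℝ) / (t : ℝ) ^ k) atTop (𝓝 (k.factorial : ℝ)⁻¹) := by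
  refine ((isEquivalent_choose k).div .refl).symm.tendsto_nhds (tendsto_const_nhds.congr' ?_)
  filter_upwards [eventually_ne_atTop 0] with t ht
  simp only [Pi.div_apply]
  field_simp

theorem tendsto_pow_mul_choose_atTop_zero {x : ℝ} (hx : 0 ≤ x) (hx1 : x < 1) (i : ℕ) :
    Tendsto (fun t : ℕ => x ^ t * (t.choose i : ℝ)) atTop (𝓝 0) := by
  refine squeeze_zero (fun t => by positivity) (fun t => ?_)
    (tendsto_pow_const_mul_const_pow_of_lt_one i hx hx1)
  rw [mul_comm]
  gcongr
  exact_mod_cast Nat.choose_le_pow t i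

variable {V : Type*} [AddCommGroup V] [Module ℝ V] [TopologicalSpace V] [ContinuousAdd V]
  [ContinuousSMul ℝ V]

theorem tendsto_inv_pow_smul_add_one_pow_apply {N : Module.End ℝ V} {v : V} {k : ℕ}
    (hk : (N ^ (k + 1)) v = 0) :
    Tendsto (fun t : ℕ => ((t : ℝ) ^ k)⁻¹ • ((N + 1) ^ t) v) atTop
      (𝓝 ((k.factorial : ℝ)⁻¹ • (N ^ k) v)) := by
  have hlower : Tendsto (fun t : ℕ => ∑ i ∈ Finset.range k,
      ((t.choose i : ℝ) / (t : ℝ) ^ k) • (N ^ i) v) atTop (𝓝 0) := by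
    simpa using tendsto_finsetSum (Finset.range k) fun i hi =>
      (tendsto_choose_div_pow_atTop_zero (Finset.mem_range.1 hi)).smul_const ((N ^ i) v)
  have htop := (tendsto_choose_div_pow_atTop_inv_factorial k).smul_const ((N ^ k) v)
  convert hlower.add htop using 2 with t
  · simp only [add_one_pow_apply_eq_sum hk, Finset.sum_range_succ, Finset.smul_sum, smul_add,
      ← Nat.cast_smul_eq_nsmul ℝ, smul_smul, div_eq_inv_mul]
  · rw [zero_add]

theorem tendsto_pow_smul_add_one_pow_apply {N : Module.End ℝ V} (hN : IsNilpotent N) {x : ℝ}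
    (hx : 0 ≤ x) (hx1 : x < 1) (v : V) :
    Tendsto (fun t : ℕ => x ^ t • ((N + 1) ^ t) v) atTop (𝓝 0) := by
  obtain ⟨d, hd⟩ := hN
  have hdv : (N ^ d) v = 0 := by rw [hd, LinearMap.zero_apply]
  simp only [add_one_pow_apply_eq_sum hdv, Finset.smul_sum, ← Nat.cast_smul_eq_nsmul ℝ, smul_smul]
  simpa using tendsto_finsetSum (Finset.range d) fun i _ =>
    (tendsto_pow_mul_choose_atTop_zero hx hx1 i).smul_const ((N ^ i) v)

theorem exists_tendsto_smul_zpow_apply_of_unipotent {u : V ≃ₗ[ℝ] V}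
    (hu : IsNilpotent ((u : Module.End ℝ V) - 1)) {v : V} (hv : v ≠ 0) :
    ∃ w ≠ 0, ∃ a b : ℕ → ℝ, Tendsto (fun t : ℕ => a t • (u ^ (t : ℤ)) v) atTop (𝓝 w) ∧
      Tendsto (fun t : ℕ => b t • (u ^ (-t : ℤ)) v) atTop (𝓝 w) := by
  obtain ⟨k, hk, hk1⟩ := exists_pow_apply_ne_zero_and_pow_succ_apply_eq_zero hu hv
  refine ⟨(k.factorial : ℝ)⁻¹ • (((u : Module.End ℝ V) - 1) ^ k) v,
    smul_ne_zero (by positivity) hk, fun t => ((t : ℝ) ^ k)⁻¹,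
    fun t => (-1) ^ k * ((t : ℝ) ^ k)⁻¹, ?_, ?_⟩
  · simpa only [zpow_natCast, pow_apply_eq_sub_one_add_one_pow_apply u]
      using tendsto_inv_pow_smul_add_one_pow_apply hk1
  · have hlim := (tendsto_inv_pow_smul_add_one_pow_apply
      (inv_sub_one_pow_succ_apply_eq_zero hk1)).const_smul ((-1 : ℝ) ^ k)
    rw [inv_sub_one_pow_apply hk1, smul_comm _ ((-1 : ℝ) ^ k), smul_smul, ← mul_pow, neg_one_mul,
      neg_neg, one_pow, one_smul] at hlim
    simpa only [← inv_zpow', zpow_natCast, pow_apply_eq_sub_one_add_one_pow_apply u⁻¹,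
      smul_smul] using hlim

end Unipotent

section PowerBounded

section BoundedOrbits

variable {ι E M : Type*} [SeminormedAddCommGroup E] [NormedSpace ℝ E]

/-- The vectors that a family of linear maps sends to a bounded family. -/
def boundedOrbits [AddCommGroup M] [Module ℝ M] (F : ι → M →ₗ[ℝ] E) : Submodule ℝ M where
  carrier := {x | ∃ C, ∀ i, ‖F i x‖ ≤ C}
  zero_mem' := ⟨0, fun i => by simp⟩
  add_mem' := by
    rintro x y ⟨C, hC⟩ ⟨D, hD⟩
    exact ⟨C + D, fun i => (map_add (F i) x y).symm ▸ norm_add_le_of_le (hC i) (hD i)⟩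
  smul_mem' := by
    rintro c x ⟨C, hC⟩
    refine ⟨‖c‖ * C, fun i => ?_⟩
    rw [map_smul, norm_smul]
    gcongr
    exact hC i

theorem exists_norm_apply_le_of_boundedOrbits_eq_top [NormedAddCommGroup M] [NormedSpace ℝ M]
    [FiniteDimensional ℝ M] {F : ι → M →ₗ[ℝ] E} (hF : boundedOrbits F = ⊤) :
    ∃ C, 0 ≤ C ∧ ∀ i x, ‖F i x‖ ≤ C * ‖x‖ := by
  have : CompleteSpace M := FiniteDimensional.complete ℝ M
  obtain ⟨C, hC⟩ := banach_steinhaus (g := fun i => (F i).toContinuousLinearMap)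
    fun x => (hF ▸ Submodule.mem_top : x ∈ boundedOrbits F)
  refine ⟨max C 0, le_max_right C 0, fun i x => ?_⟩
  exact (F i).toContinuousLinearMap.le_of_opNorm_le ((hC i).trans (le_max_left C 0)) x

theorem norm_apply_smul_le_of_norm_eq_one {W : Type*} [AddCommGroup W] [Module ℂ W] [Module ℝ W]
    [IsScalarTower ℝ ℂ W] (ρ : W →ₗ[ℝ] E) {z : ℂ} (hz : ‖z‖ = 1) (y : W) :
    ‖ρ (z • y)‖ ≤ ‖ρ y‖ + ‖ρ (Complex.I • y)‖ := by
  have hsplit : z • y = z.re • y + z.im • Complex.I • y := by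
    have hz : z = z.re • (1 : ℂ) + z.im • Complex.I := by simp
    conv_lhs => rw [hz, add_smul, smul_assoc, smul_assoc, one_smul]
  rw [hsplit, map_add, map_smul, map_smul]
  refine norm_add_le_of_le ?_ ?_ <;> rw [norm_smul]
  · exact mul_le_of_le_one_left (norm_nonneg _) (hz ▸ z.abs_re_le_norm)
  · exact mul_le_of_le_one_left (norm_nonneg _) (hz ▸ z.abs_im_le_norm)

theorem boundedOrbits_zpow_eq_top_of_isSemisimple {W : Type*} [AddCommGroup W] [Module ℂ W]
    [FiniteDimensional ℂ W] [Module ℝ W] [IsScalarTower ℝ ℂ W] {f : W ≃ₗ[ℂ] W}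
    (hf : Module.End.IsSemisimple (f : W →ₗ[ℂ] W))
    (hspec : ∀ μ ∈ spectrum ℂ (f : W →ₗ[ℂ] W), ‖μ‖ = 1) (ρ : W →ₗ[ℝ] E) :
    boundedOrbits (fun t : ℤ => ρ ∘ₗ (f ^ t).toLinearMap.restrictScalars ℝ) = ⊤ := by
  have hfs := Module.End.isFinitelySemisimple_iff_isSemisimple.2 hf
  refine Submodule.eq_top_iff'.2 fun x => ?_
  have hx : x ∈ ⨆ μ, Module.End.eigenspace (f : W →ₗ[ℂ] W) μ := by
    simp only [← hfs.maxGenEigenspace_eq_eigenspace, Module.End.iSup_maxGenEigenspace_eq_top,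
      Submodule.mem_top]
  induction hx using Submodule.iSup_induction' with
  | zero => exact zero_mem _
  | add y z _ _ hy hz => exact add_mem hy hz
  | mem μ y hy =>
    rcases eq_or_ne y 0 with rfl | hy0
    · exact zero_mem _
    have hμ : ‖μ‖ = 1 := hspec μ
      (Module.End.hasEigenvalue_of_hasEigenvector ⟨hy, hy0⟩).mem_spectrum
    refine ⟨‖ρ y‖ + ‖ρ (Complex.I • y)‖, fun t => ?_⟩
    have hft : (f ^ t) y = μ ^ t • y :=
      zpow_apply_of_apply_eq_smul (Module.End.mem_eigenspace_iff.1 hy) t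
    simpa [hft] using norm_apply_smul_le_of_norm_eq_one ρ (z := μ ^ t) (by simp [hμ]) y

end BoundedOrbits

variable {V : Type*} [NormedAddCommGroup V] [NormedSpace ℝ V]

/-- The integer powers of `e` are uniformly bounded. -/
def IsPowerBounded (e : V ≃ₗ[ℝ] V) : Prop :=
  ∃ C, 0 ≤ C ∧ ∀ (t : ℤ) x, ‖(e ^ t) x‖ ≤ C * ‖x‖

theorem IsPowerBounded.inv {e : V ≃ₗ[ℝ] V} (he : IsPowerBounded e) : IsPowerBounded e⁻¹ := by
  obtain ⟨C, hC0, hC⟩ := he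
  exact ⟨C, hC0, fun t x => by simpa only [inv_zpow'] using hC (-t) x⟩

theorem isPowerBounded_of_isSemisimple_baseChange [FiniteDimensional ℝ V] {e : V ≃ₗ[ℝ] V}
    (he : Module.End.IsSemisimple (LinearMap.baseChange ℂ (e : V →ₗ[ℝ] V)))
    (hspec : ∀ μ ∈ spectrum ℂ (LinearMap.baseChange ℂ (e : V →ₗ[ℝ] V)), ‖μ‖ = 1) :
    IsPowerBounded e := by
  let realPart : TensorProduct ℝ ℂ V →ₗ[ℝ] V :=
    (TensorProduct.lid ℝ V).toLinearMap ∘ₗ Complex.reLm.rTensor V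
  have hbdd :=
    boundedOrbits_zpow_eq_top_of_isSemisimple (f := e.baseChange ℝ ℂ V V) he hspec realPart
  refine exists_norm_apply_le_of_boundedOrbits_eq_top
    (F := fun t : ℤ => ((e ^ t : V ≃ₗ[ℝ] V) : V →ₗ[ℝ] V)) (Submodule.eq_top_iff'.2 fun v => ?_)
  obtain ⟨C, hC⟩ := (hbdd ▸ Submodule.mem_top : (1 : ℂ) ⊗ₜ[ℝ] v ∈ boundedOrbits _)
  refine ⟨C, fun t => ?_⟩
  simpa [realPart, ← LinearEquiv.baseChange_zpow] using hC t

theorem exists_tendsto_zpow_one_of_isBounded {A : Type*} [NormedRing A] [ProperSpace A] {a : Aˣ}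
    (ha : Bornology.IsBounded (Set.range fun t : ℤ => ((a ^ t : Aˣ) : A))) :
    ∃ ψ : ℕ → ℕ, Tendsto ψ atTop atTop ∧
      Tendsto (fun n => ((a ^ (ψ n : ℤ) : Aˣ) : A)) atTop (𝓝 1) ∧
      Tendsto (fun n => ((a ^ (-ψ n : ℤ) : Aˣ) : A)) atTop (𝓝 1) := by
  obtain ⟨⟨x, y⟩, -, φ, hφ, hlim⟩ := tendsto_subseq_of_bounded (ha.prod ha)
    (x := fun n : ℕ => (((a ^ (n : ℤ) : Aˣ) : A), ((a ^ (-n : ℤ) : Aˣ) : A)))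
    fun n => ⟨⟨n, rfl⟩, ⟨-n, rfl⟩⟩
  have hx : Tendsto (fun n => ((a ^ (φ n : ℤ) : Aˣ) : A)) atTop (𝓝 x) := hlim.fst_nhds
  have hy : Tendsto (fun n => ((a ^ (-φ n : ℤ) : Aˣ) : A)) atTop (𝓝 y) := hlim.snd_nhds
  have hxy : x * y = 1 := tendsto_nhds_unique (hx.mul hy) <| by
    simp only [← Units.val_mul, ← zpow_add, add_neg_cancel, zpow_zero, Units.val_one,
      tendsto_const_nhds_iff]
  have hdouble : Tendsto (fun n : ℕ => 2 * n) atTop atTop :=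
    tendsto_id.const_mul_atTop' two_pos
  have hcast (n : ℕ) : ((φ (2 * n) - φ n : ℕ) : ℤ) = φ (2 * n) + -φ n := by
    rw [Nat.cast_sub (hφ.monotone (by lia)), sub_eq_add_neg]
  -- Differences of times along a convergent subsequence are return times to the identity.
  refine ⟨fun n => φ (2 * n) - φ n, ?_, ?_, ?_⟩
  · refine tendsto_atTop_mono (fun n => ?_) tendsto_id
    have := hφ.add_le_nat n n
    rw [id, two_mul]
    lia
  · have hlim := (hx.comp hdouble).mul hy
    rw [hxy] at hlim
    refine hlim.congr fun n => ?_
    rw [hcast, zpow_add, Units.val_mul, Function.comp_apply]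
  · have hlim := hx.mul (hy.comp hdouble)
    rw [hxy] at hlim
    refine hlim.congr fun n => ?_
    rw [hcast, neg_add_rev, neg_neg, zpow_add, Units.val_mul, Function.comp_apply]

theorem IsPowerBounded.exists_tendsto_zpow_apply [FiniteDimensional ℝ V] {e : V ≃ₗ[ℝ] V}
    (he : IsPowerBounded e) :
    ∃ ψ : ℕ → ℕ, Tendsto ψ atTop atTop ∧ ∀ (x : ℕ → V) (w : V), Tendsto x atTop (𝓝 w) →
      Tendsto (fun n => (e ^ (ψ n : ℤ)) (x n)) atTop (𝓝 w) ∧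
      Tendsto (fun n => (e ^ (-ψ n : ℤ)) (x n)) atTop (𝓝 w) := by
  let toUnits : (V ≃ₗ[ℝ] V) →* (V →L[ℝ] V)ˣ :=
    (Units.map (Module.End.toContinuousLinearMap V).toAlgHom.toMonoidHom).comp
      (LinearMap.GeneralLinearGroup.generalLinearEquiv ℝ V).symm.toMonoidHom
  have hunits (t : ℤ) (x : V) : ((toUnits e ^ t : (V →L[ℝ] V)ˣ) : V →L[ℝ] V) x = (e ^ t) x := by
    rw [← map_zpow]
    rfl
  obtain ⟨C, hC0, hC⟩ := he
  have hbdd : Bornology.IsBounded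
      (Set.range fun t : ℤ => ((toUnits e ^ t : (V →L[ℝ] V)ˣ) : V →L[ℝ] V)) := by
    refine isBounded_iff_forall_norm_le.2 ⟨C, Set.forall_mem_range.2 fun t => ?_⟩
    exact ContinuousLinearMap.opNorm_le_bound _ hC0 fun x => (hunits t x).symm ▸ hC t x
  have : ProperSpace (V →L[ℝ] V) := FiniteDimensional.proper_real _
  obtain ⟨ψ, hψ, hfwd, hbwd⟩ := exists_tendsto_zpow_one_of_isBounded hbdd
  have tendsto_apply {x : ℕ → V} {w : V} (hx : Tendsto x atTop (𝓝 w)) {B : ℕ → V →L[ℝ] V}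
      (hB : Tendsto B atTop (𝓝 1)) : Tendsto (fun n => B n (x n)) atTop (𝓝 w) :=
    (isBoundedBilinearMap_apply.continuous.tendsto ((1 : V →L[ℝ] V), w)).comp (hB.prodMk_nhds hx)
  refine ⟨ψ, hψ, fun x w hx => ⟨?_, ?_⟩⟩
  · simpa only [hunits] using tendsto_apply hx hfwd
  · simpa only [hunits] using tendsto_apply hx hbwd

end PowerBounded

section DominatedSplitting

theorem projection_pow_apply {R M : Type*} [Ring R] [AddCommGroup M] [Module R M] {f : M ≃ₗ[R] M}
    {A B : Submodule R M} (hAB : IsCompl A B) (hA : ∀ x ∈ A, f x ∈ A) (hB : ∀ x ∈ B, f x ∈ B)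
    (t : ℕ) (x : M) :
    A.projection B hAB ((f ^ t) x) = (f ^ t) (A.projection B hAB x) := by
  have hcomm : Commute (A.projection B hAB) (f : Module.End R M) := by
    rw [LinearMap.IsIdempotentElem.commute_iff (Submodule.isIdempotentElem_projection hAB),
      Submodule.range_projection, Submodule.ker_projection]
    exact ⟨hA, hB⟩
  induction t generalizing x with
  | zero => rfl
  | succ t ih => exact (ih (f x)).trans (congrArg (f ^ t) (LinearMap.congr_fun hcomm.eq x))

variable {V : Type*} [NormedAddCommGroup V] [NormedSpace ℝ V] {g : V ≃ₗ[ℝ] V} {r : ℝ}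
  {A B W : Submodule ℝ V}

/-- The forward iterates of `g` grow on `W` uniformly at most like `r ^ t`. -/
def HasGrowthLE (g : V ≃ₗ[ℝ] V) (r : ℝ) (W : Submodule ℝ V) : Prop :=
  ∃ C, 0 ≤ C ∧ ∀ t : ℕ, ∀ x ∈ W, ‖(g ^ t) x‖ ≤ C * r ^ t * ‖x‖

theorem hasGrowthLE_of_le_boundedOrbits [FiniteDimensional ℝ V] (hr : 0 < r)
    (hW : W ≤ boundedOrbits fun t : ℕ => (r ^ t)⁻¹ • ((g ^ t : V ≃ₗ[ℝ] V) : V →ₗ[ℝ] V)) :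
    HasGrowthLE g r W := by
  obtain ⟨C, hC0, hC⟩ := exists_norm_apply_le_of_boundedOrbits_eq_top
    (F := fun t : ℕ => ((r ^ t)⁻¹ • ((g ^ t : V ≃ₗ[ℝ] V) : V →ₗ[ℝ] V)) ∘ₗ W.subtype)
    (Submodule.eq_top_iff'.2 fun x => hW x.2)
  refine ⟨C, hC0, fun t x hx => ?_⟩
  have hrt : 0 < r ^ t := pow_pos hr t
  calc ‖(g ^ t) x‖ = r ^ t * ‖(r ^ t)⁻¹ • (g ^ t) x‖ := by
        rw [norm_smul, norm_inv, Real.norm_of_nonneg hrt.le, mul_inv_cancel_left₀ hrt.ne']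
    _ ≤ r ^ t * (C * ‖x‖) := by gcongr; exact hC t ⟨x, hx⟩
    _ = C * r ^ t * ‖x‖ := by ring

theorem entersTrap_of_cone [FiniteDimensional ℝ V] {E F : Type*} [NormedAddCommGroup E]
    [NormedSpace ℝ E] [NormedAddCommGroup F] [NormedSpace ℝ F] {P : V →ₗ[ℝ] E} {Q : V →ₗ[ℝ] F}
    (hPQ : Disjoint P.ker Q.ker) {c : ℝ} (hc : 0 < c) {T : ℕ}
    (hT : ∀ t ≥ T, ∀ x, ‖Q x‖ ≤ c * ‖P x‖ → ‖Q ((g ^ t) x)‖ ≤ c / 2 * ‖P ((g ^ t) x)‖)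
    {p : ℙ ℝ V} (hp : ‖Q p.rep‖ = c * ‖P p.rep‖) : EntersTrap (projFlow g) T p := by
  let K : Set V := {x | ‖Q x‖ ≤ c / 2 * ‖P x‖}
  let O : Set V := {x | ‖Q x‖ < c * ‖P x‖}
  have hK (a : ℝˣ) : ∀ x ∈ K, a • x ∈ K := fun x hx => by
    simpa [K, Units.smul_def, norm_smul, mul_left_comm (c / 2)] using hx
  have hO (a : ℝˣ) : ∀ x ∈ O, a • x ∈ O := fun x hx => by
    simpa [O, Units.smul_def, norm_smul, mul_left_comm c] using hx
  have hKO {x : V} (hx0 : x ≠ 0) (hx : x ∈ K) : x ∈ O := by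
    have hPx : P x ≠ 0 := fun hPx => hx0 <| by
      have hQx : Q x = 0 := by simpa [K, hPx] using hx
      exact Submodule.disjoint_def.1 hPQ x hPx hQx
    exact hx.trans_lt (mul_lt_mul_of_pos_right (half_lt_self hc) (norm_pos_iff.2 hPx))
  have hPc : Continuous P := P.continuous_of_finiteDimensional
  have hQc : Continuous Q := Q.continuous_of_finiteDimensional
  have := compactSpace_projectivization (V := V)
  refine ⟨{q | q.rep ∈ K}, {q | q.rep ∈ O},
    (isClosed_setOf_rep_mem hK (isClosed_le (by fun_prop) (by fun_prop))).isCompact,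
    isOpen_setOf_rep_mem hO (isOpen_lt (by fun_prop) (by fun_prop)),
    fun q hq => hKO q.rep_nonzero hq, hp.not_lt, fun t ht q hq => ?_⟩
  lift t to ℕ using (Nat.cast_nonneg T).trans ht
  have hqO : ‖Q q.rep‖ ≤ c * ‖P q.rep‖ := by
    rcases hq with rfl | hq
    · exact hp.le
    · exact hq.le
  rw [projFlow_eq_mk, Set.mem_ofPred_eq, rep_mk_mem_iff hK, zpow_natCast]
  exact hT t (Nat.cast_le.1 ht) q.rep hqO

/-- A splitting of `V` into invariant subspaces such that `g` expands every vector of `A`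
exponentially faster than every vector of `B`. -/
structure IsDominatedSplitting (g : V ≃ₗ[ℝ] V) (A B : Submodule ℝ V) : Prop where
  isCompl : IsCompl A B
  apply_mem_left : ∀ x ∈ A, g x ∈ A
  apply_mem_right : ∀ x ∈ B, g x ∈ B
  exists_hasGrowthLE : ∃ r₁ r₂, 0 < r₁ ∧ r₁ < r₂ ∧ HasGrowthLE g r₁ B ∧ HasGrowthLE g⁻¹ r₂⁻¹ A

namespace IsDominatedSplitting

theorem exists_norm_pow_apply_mul_norm_le (hg : IsDominatedSplitting g A B) {δ : ℝ} (hδ : 0 < δ) :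
    ∃ T : ℕ, ∀ t ≥ T, ∀ a ∈ A, ∀ b ∈ B,
      ‖(g ^ t) b‖ * ‖a‖ ≤ δ * (‖b‖ * ‖(g ^ t) a‖) := by
  obtain ⟨r₁, r₂, hr₁, hr, ⟨C₁, hC₁, hB⟩, C₂, -, hA⟩ := hg.exists_hasGrowthLE
  have hr₂ : 0 < r₂ := hr₁.trans hr
  have hlim : Tendsto (fun t : ℕ => C₁ * C₂ * (r₁ / r₂) ^ t) atTop (𝓝 0) := by
    simpa using (tendsto_pow_atTop_nhds_zero_of_lt_one (div_pos hr₁ hr₂).le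
      ((div_lt_one hr₂).2 hr)).const_mul (C₁ * C₂)
  obtain ⟨T, hT⟩ := eventually_atTop.1 (hlim.eventually_le_const hδ)
  refine ⟨T, fun t ht a ha b hb => ?_⟩
  have hgta : (g ^ t) a ∈ A := by
    rw [LinearEquiv.pow_apply]
    exact Set.MapsTo.iterate hg.apply_mem_left t ha
  have hback : (g⁻¹ ^ t) ((g ^ t) a) = a := by
    rw [inv_pow]
    exact (g ^ t).symm_apply_apply a
  calc ‖(g ^ t) b‖ * ‖a‖ ≤ C₁ * r₁ ^ t * ‖b‖ * (C₂ * r₂⁻¹ ^ t * ‖(g ^ t) a‖) := by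
        gcongr
        · exact hB t b hb
        · simpa only [hback] using hA t _ hgta
    _ = C₁ * C₂ * (r₁ / r₂) ^ t * (‖b‖ * ‖(g ^ t) a‖) := by
        rw [div_eq_mul_inv, mul_pow]
        ring
    _ ≤ δ * (‖b‖ * ‖(g ^ t) a‖) := by
        gcongr
        exact hT t ht

theorem exists_mapsTo_cone (hg : IsDominatedSplitting g A B) :
    ∃ T : ℕ, ∀ t ≥ T, ∀ (c : ℝ) x,
      ‖B.projection A hg.isCompl.symm x‖ ≤ c * ‖A.projection B hg.isCompl x‖ →
      ‖B.projection A hg.isCompl.symm ((g ^ t) x)‖ ≤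
        c / 2 * ‖A.projection B hg.isCompl ((g ^ t) x)‖ := by
  obtain ⟨T, hT⟩ := hg.exists_norm_pow_apply_mul_norm_le one_half_pos
  refine ⟨T, fun t ht c x hx => ?_⟩
  rw [projection_pow_apply hg.isCompl hg.apply_mem_left hg.apply_mem_right,
    projection_pow_apply hg.isCompl.symm hg.apply_mem_right hg.apply_mem_left]
  set a := A.projection B hg.isCompl x
  set b := B.projection A hg.isCompl.symm x
  rcases eq_or_ne a 0 with ha | ha
  · have hb : b = 0 := by simpa [ha] using hx
    simp [ha, hb]
  · refine le_of_mul_le_mul_right ?_ (norm_pos_iff.2 ha)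
    calc ‖(g ^ t) b‖ * ‖a‖ ≤ 1 / 2 * (‖b‖ * ‖(g ^ t) a‖) :=
          hT t ht a (Submodule.projection_apply_mem _ x) b (Submodule.projection_apply_mem _ x)
      _ ≤ 1 / 2 * (c * ‖a‖ * ‖(g ^ t) a‖) := by gcongr
      _ = c / 2 * ‖(g ^ t) a‖ * ‖a‖ := by ring

theorem exists_entersTrap [FiniteDimensional ℝ V] (hg : IsDominatedSplitting g A B) {p : ℙ ℝ V}
    (hpA : p.rep ∉ A) (hpB : p.rep ∉ B) : ∃ T > 0, EntersTrap (projFlow g) T p := by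
  obtain ⟨T, hT⟩ := hg.exists_mapsTo_cone
  have hP : 0 < ‖A.projection B hg.isCompl p.rep‖ := norm_pos_iff.2 fun h =>
    hpB ((Submodule.projection_apply_eq_zero_iff hg.isCompl).1 h)
  have hQ : 0 < ‖B.projection A hg.isCompl.symm p.rep‖ := norm_pos_iff.2 fun h =>
    hpA ((Submodule.projection_apply_eq_zero_iff hg.isCompl.symm).1 h)
  refine ⟨(T + 1 : ℕ), by positivity, entersTrap_of_cone ?_ (div_pos hQ hP)
    (fun t ht x => hT t (Nat.le_of_succ_le ht) _ x) (div_mul_cancel₀ _ hP.ne').symm⟩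
  rw [Submodule.ker_projection, Submodule.ker_projection]
  exact hg.isCompl.symm.disjoint

end IsDominatedSplitting

end DominatedSplitting

section JordanFactorization

variable {V : Type*} [NormedAddCommGroup V] [NormedSpace ℝ V] {g e h u : V ≃ₗ[ℝ] V}

/-- The multiplicative Jordan decomposition of `g`. Ellipticity of `e` is encoded by the
boundedness of its powers; the eigenspaces of `h` are quantified over where they are needed. -/
structure IsJordanFactorization (g e h u : V ≃ₗ[ℝ] V) : Prop where
  eq_mul : g = e * h * u
  commute_elliptic_hyperbolic : Commute e h
  commute_elliptic_unipotent : Commute e u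
  commute_hyperbolic_unipotent : Commute h u
  isPowerBounded : IsPowerBounded e
  isNilpotent : IsNilpotent ((u : Module.End ℝ V) - 1)

namespace IsJordanFactorization

theorem inv (hg : IsJordanFactorization g e h u) : IsJordanFactorization g⁻¹ e⁻¹ h⁻¹ u⁻¹ where
  eq_mul := by
    rw [hg.eq_mul, (hg.commute_elliptic_unipotent.mul_left hg.commute_hyperbolic_unipotent).eq,
      hg.commute_elliptic_hyperbolic.eq, mul_inv_rev, mul_inv_rev]
  commute_elliptic_hyperbolic := hg.commute_elliptic_hyperbolic.inv_inv
  commute_elliptic_unipotent := hg.commute_elliptic_unipotent.inv_inv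
  commute_hyperbolic_unipotent := hg.commute_hyperbolic_unipotent.inv_inv
  isPowerBounded := hg.isPowerBounded.inv
  isNilpotent := isNilpotent_inv_sub_one hg.isNilpotent

theorem apply_mem_eigenspace (hg : IsJordanFactorization g e h u) {c : ℝ} {x : V}
    (hx : x ∈ Module.End.eigenspace (h : V →ₗ[ℝ] V) c) :
    g x ∈ Module.End.eigenspace (h : V →ₗ[ℝ] V) c := by
  have hcomm : Commute h g := hg.eq_mul ▸
    (hg.commute_elliptic_hyperbolic.symm.mul_right (.refl h)).mul_right
      hg.commute_hyperbolic_unipotent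
  exact Module.End.mapsTo_genEigenspace_of_comm
    (hcomm.map LinearEquiv.automorphismGroup.toLinearMapMonoidHom) c 1 hx

theorem apply_mem_biSup_eigenspace (hg : IsJordanFactorization g e h u) {ι : Type*} {l : ι → ℝ}
    {s : Set ι} {x : V} (hx : x ∈ ⨆ k ∈ s, Module.End.eigenspace (h : V →ₗ[ℝ] V) (l k)) :
    g x ∈ ⨆ k ∈ s, Module.End.eigenspace (h : V →ₗ[ℝ] V) (l k) := by
  let E := fun k => Module.End.eigenspace (h : V →ₗ[ℝ] V) (l k)
  have hinv : ⨆ k ∈ s, E k ≤ (⨆ k ∈ s, E k).comap (g : V →ₗ[ℝ] V) :=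
    iSup₂_le fun k hk y hy => le_biSup E hk (hg.apply_mem_eigenspace hy)
  exact hinv hx

theorem zpow_apply_of_mem_eigenspace (hg : IsJordanFactorization g e h u) {c : ℝ} {x : V}
    (hx : x ∈ Module.End.eigenspace (h : V →ₗ[ℝ] V) c) (t : ℤ) :
    (g ^ t) x = c ^ t • (e ^ t) ((u ^ t) x) := by
  have hpow : g ^ t = e ^ t * u ^ t * h ^ t := by
    rw [hg.eq_mul, mul_assoc, hg.commute_hyperbolic_unipotent.eq, ← mul_assoc,
      (hg.commute_elliptic_hyperbolic.mul_left hg.commute_hyperbolic_unipotent.symm).mul_zpow,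
      hg.commute_elliptic_unipotent.mul_zpow]
  rw [hpow, LinearEquiv.mul_apply, LinearEquiv.mul_apply,
    zpow_apply_of_apply_eq_smul (Module.End.mem_eigenspace_iff.1 hx), map_smul, map_smul]

theorem eigenspace_le_boundedOrbits (hg : IsJordanFactorization g e h u) {c r : ℝ} (hc : |c| < r) :
    Module.End.eigenspace (h : V →ₗ[ℝ] V) c ≤
      boundedOrbits fun t : ℕ => (r ^ t)⁻¹ • ((g ^ t : V ≃ₗ[ℝ] V) : V →ₗ[ℝ] V) := by
  intro x hx
  have hr : 0 < r := (abs_nonneg c).trans_lt hc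
  obtain ⟨C, hC0, hC⟩ := hg.isPowerBounded
  have hlim := (tendsto_pow_smul_add_one_pow_apply hg.isNilpotent (by positivity : 0 ≤ |c| / r)
    ((div_lt_one hr).2 hc) x).norm
  obtain ⟨D, hD⟩ := hlim.bddAbove_range
  refine ⟨C * D, fun t => ?_⟩
  have hgt : (g ^ t) x = c ^ t • (e ^ t) ((u ^ t) x) := mod_cast
    hg.zpow_apply_of_mem_eigenspace hx t
  calc ‖(r ^ t)⁻¹ • (g ^ t) x‖ = (|c| / r) ^ t * ‖(e ^ (t : ℤ)) ((u ^ t) x)‖ := by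
        rw [hgt, norm_smul, norm_smul, norm_inv, norm_pow, norm_pow, Real.norm_of_nonneg hr.le,
          Real.norm_eq_abs, div_pow, zpow_natCast]
        ring
    _ ≤ (|c| / r) ^ t * (C * ‖(u ^ t) x‖) := by gcongr; exact hC t _
    _ = C * ‖(|c| / r) ^ t • (((u : Module.End ℝ V) - 1 + 1) ^ t) x‖ := by
        rw [norm_smul, Real.norm_of_nonneg (by positivity), pow_apply_eq_sub_one_add_one_pow_apply]
        ring
    _ ≤ C * D := by gcongr; exact hD ⟨t, rfl⟩

variable [FiniteDimensional ℝ V]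

theorem exists_isTwoSidedLimit (hg : IsJordanFactorization g e h u) {c : ℝ} {p : ℙ ℝ V}
    (hp : p.rep ∈ Module.End.eigenspace (h : V →ₗ[ℝ] V) c) :
    ∃ w, IsTwoSidedLimit (projFlow g) p w := by
  have hc : c ≠ 0 := by
    rintro rfl
    refine h.map_ne_zero_iff.2 p.rep_nonzero ?_
    simpa using Module.End.mem_eigenspace_iff.1 hp
  obtain ⟨w, hw, a, b, ha, hb⟩ :=
    exists_tendsto_smul_zpow_apply_of_unipotent hg.isNilpotent p.rep_nonzero
  obtain ⟨ψ, hψ, he⟩ := hg.isPowerBounded.exists_tendsto_zpow_apply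
  have hscale (s : ℝ) (t : ℤ) :
      (s * (c ^ t)⁻¹) • (g ^ t) p.rep = (e ^ t) (s • (u ^ t) p.rep) := by
    rw [hg.zpow_apply_of_mem_eigenspace hp, smul_smul, mul_assoc,
      inv_mul_cancel₀ (zpow_ne_zero t hc), mul_one, map_smul]
  refine ⟨.mk ℝ w hw, ψ, hψ, ?_, ?_⟩ <;> simp only [projFlow_eq_mk]
  · refine tendsto_mk_of_tendsto_smul (a := fun n => a (ψ n) * (c ^ (ψ n : ℤ))⁻¹) _ hw ?_
    simpa only [hscale, Function.comp_apply] using (he _ w (ha.comp hψ)).1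
  · refine tendsto_mk_of_tendsto_smul (a := fun n => b (ψ n) * (c ^ (-ψ n : ℤ))⁻¹) _ hw ?_
    simpa only [hscale, Function.comp_apply] using (he _ w (hb.comp hψ)).2

theorem hasGrowthLE_biSup_eigenspace (hg : IsJordanFactorization g e h u) {ι : Type*} {l : ι → ℝ}
    {s : Set ι} {r : ℝ} (hr : 0 < r) (hl : ∀ k ∈ s, |l k| < r) :
    HasGrowthLE g r (⨆ k ∈ s, Module.End.eigenspace (h : V →ₗ[ℝ] V) (l k)) :=
  hasGrowthLE_of_le_boundedOrbits hr
    (iSup₂_le fun k hk => hg.eigenspace_le_boundedOrbits (hl k hk))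

theorem hasGrowthLE_inv_biSup_eigenspace (hg : IsJordanFactorization g e h u) {ι : Type*}
    {l : ι → ℝ} {s : Set ι} {r : ℝ} (hr : 0 < r) (hl : ∀ k ∈ s, r < |l k|) :
    HasGrowthLE g⁻¹ r⁻¹ (⨆ k ∈ s, Module.End.eigenspace (h : V →ₗ[ℝ] V) (l k)) := by
  refine hasGrowthLE_of_le_boundedOrbits (inv_pos.2 hr) (iSup₂_le fun k hk x hx => ?_)
  have hlk : |(l k)⁻¹| < r⁻¹ := abs_inv (l k) ▸ inv_strictAnti₀ hr (hl k hk)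
  exact hg.inv.eigenspace_le_boundedOrbits hlk (mem_eigenspace_inv hx)

theorem isDominatedSplitting (hg : IsJordanFactorization g e h u) {ι : Type*} [LinearOrder ι]
    [Finite ι] {l : ι → ℝ} (hl : StrictAnti l) (hlpos : ∀ k, 0 < l k)
    (hdiag : ⨆ k, Module.End.eigenspace (h : V →ₗ[ℝ] V) (l k) = ⊤) (i : ι) :
    IsDominatedSplitting g (⨆ k ∈ Set.Iic i, Module.End.eigenspace (h : V →ₗ[ℝ] V) (l k))
      (⨆ k ∈ Set.Ioi i, Module.End.eigenspace (h : V →ₗ[ℝ] V) (l k)) where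
  isCompl := isCompl_biSup_Iic_biSup_Ioi
    ((Module.End.eigenspaces_iSupIndep (h : V →ₗ[ℝ] V)).comp hl.injective) hdiag i
  apply_mem_left := fun _ => hg.apply_mem_biSup_eigenspace
  apply_mem_right := fun _ => hg.apply_mem_biSup_eigenspace
  exists_hasGrowthLE := by
    have hgap : ∀ᶠ r in 𝓝[<] (l i), ∀ k ∈ Set.Ioi i, |l k| < r :=
      (Set.toFinite (Set.Ioi i)).eventually_all.2 fun k hk => nhdsWithin_le_nhds
        (eventually_gt_nhds ((abs_of_pos (hlpos k)).trans_lt (hl hk)))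
    obtain ⟨r₁, hr₁, hr₁0, hr₁i⟩ := (hgap.and (Ioo_mem_nhdsLT (hlpos i))).exists
    obtain ⟨r₂, hr₁₂, hr₂i⟩ := exists_between hr₁i
    refine ⟨r₁, r₂, hr₁0, hr₁₂, hg.hasGrowthLE_biSup_eigenspace hr₁0 hr₁,
      hg.hasGrowthLE_inv_biSup_eigenspace (hr₁0.trans hr₁₂) fun k hk => ?_⟩
    exact hr₂i.trans_le ((hl.antitone hk).trans (le_abs_self _))

theorem exists_entersTrap (hg : IsJordanFactorization g e h u) {ι : Type*} [LinearOrder ι]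
    [Finite ι] {l : ι → ℝ} (hl : StrictAnti l) (hlpos : ∀ k, 0 < l k)
    (hdiag : ⨆ k, Module.End.eigenspace (h : V →ₗ[ℝ] V) (l k) = ⊤) {p : ℙ ℝ V}
    (hp : ∀ k, p.rep ∉ Module.End.eigenspace (h : V →ₗ[ℝ] V) (l k)) :
    ∃ T > 0, EntersTrap (projFlow g) T p := by
  obtain ⟨i, hpA, hpB⟩ := exists_notMem_biSup_Iic_and_notMem_biSup_Ioi
    ((Module.End.eigenspaces_iSupIndep (h : V →ₗ[ℝ] V)).comp hl.injective) hdiag p.rep_nonzero hp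
  exact (hg.isDominatedSplitting hl hlpos hdiag i).exists_entersTrap hpA hpB

end IsJordanFactorization

end JordanFactorization

/-- Let `g = e h u` be the multiplicative Jordan decomposition of
`g ∈ GL(V)`, with eigenspace decomposition `V = V_{λ₁} ⊕ ⋯ ⊕ V_{λ_n}` of `h`.  For any
metric inducing the topology of `ℙ(V)`: each projectivized eigenspace `ℙ(V_{λ_i})` is chain
transitive, and the chain recurrent set of the induced flow of `g` equals the fixed point
set of the induced flow of `h`, which is `⋃ᵢ ℙ(V_{λ_i})`; hence `{ℙ(V_{λ_i})}` is the
finest Morse decomposition. -/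
theorem chain_recurrent_set_eq_fix_hyperbolic
    {V : Type*} [NormedAddCommGroup V] [NormedSpace ℝ V] [FiniteDimensional ℝ V]
    (g e h u : V ≃ₗ[ℝ] V) (hg : g = e * h * u)
    (heh : Commute (e : V →ₗ[ℝ] V) (h : V →ₗ[ℝ] V))
    (heu : Commute (e : V →ₗ[ℝ] V) (u : V →ₗ[ℝ] V))
    (hhu : Commute (h : V →ₗ[ℝ] V) (u : V →ₗ[ℝ] V))
    (he : Module.End.IsSemisimple (LinearMap.baseChange ℂ (e : V →ₗ[ℝ] V)) ∧
      ∀ μ ∈ spectrum ℂ (LinearMap.baseChange ℂ (e : V →ₗ[ℝ] V)), ‖μ‖ = 1)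
    (hu : IsNilpotent ((u : V →ₗ[ℝ] V) - 1))
    (n : ℕ) (l : Fin n → ℝ) (hl : StrictAnti l) (hlpos : ∀ k, 0 < l k)
    (hdiag : ⨆ k : Fin n, Module.End.eigenspace (h : V →ₗ[ℝ] V) (l k) = ⊤)
    (m : MetricSpace (ℙ ℝ V))
    (hm : m.toUniformSpace.toTopologicalSpace =
      (projectivizationTopology : TopologicalSpace (ℙ ℝ V))) :
    (∀ (k : Fin n) (p q : ℙ ℝ V),
      p.rep ∈ Module.End.eigenspace (h : V →ₗ[ℝ] V) (l k) →
      q.rep ∈ Module.End.eigenspace (h : V →ₗ[ℝ] V) (l k) →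
      ∀ ε > (0 : ℝ), ∀ T > (0 : ℤ), IsChainZ m.dist (projFlow g) ε T p q) ∧
    {p : ℙ ℝ V | ∀ ε > (0 : ℝ), ∀ T > (0 : ℤ), IsChainZ m.dist (projFlow g) ε T p p} =
      {p : ℙ ℝ V | ∀ t : ℤ, projFlow h t p = p} ∧
    {p : ℙ ℝ V | ∀ t : ℤ, projFlow h t p = p} =
      ⋃ k : Fin n, {p : ℙ ℝ V | p.rep ∈ Module.End.eigenspace (h : V →ₗ[ℝ] V) (l k)} := by
  let _ : MetricSpace (ℙ ℝ V) := m.replaceTopology hm.symm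
  have hJordan : IsJordanFactorization g e h u :=
    ⟨hg, commute_of_commute_toLinearMap heh, commute_of_commute_toLinearMap heu,
      commute_of_commute_toLinearMap hhu, isPowerBounded_of_isSemisimple_baseChange he.1 he.2, hu⟩
  have htrans (k : Fin n) (p q : ℙ ℝ V)
      (hp : p.rep ∈ Module.End.eigenspace (h : V →ₗ[ℝ] V) (l k))
      (hq : q.rep ∈ Module.End.eigenspace (h : V →ₗ[ℝ] V) (l k)) (ε : ℝ) (hε : 0 < ε) (T : ℤ) :
      IsChainZ dist (projFlow g) ε T p q :=
    isChainZ_of_isPreconnected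
      (isPreconnected_setOf_rep_mem (Module.End.eigenspace (h : V →ₗ[ℝ] V) (l k)))
      (projFlow_apply_neg g) (fun _ hx => hJordan.exists_isTwoSidedLimit hx) hε hp hq
  have hfix := setOf_forall_projFlow_eq hdiag
  refine ⟨fun k p q hp hq ε hε T _ => htrans k p q hp hq ε hε T, hfix ▸ ?_, hfix⟩
  ext p
  refine ⟨fun hrec => ?_, fun hp ε hε T _ => ?_⟩
  · by_contra hp
    obtain ⟨T, hT, htrap⟩ :=
      hJordan.exists_entersTrap hl hlpos hdiag fun k hk => hp (Set.mem_iUnion.2 ⟨k, hk⟩)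
    obtain ⟨ε, hε, hno⟩ := htrap.exists_not_isChainZ
    exact hno (hrec ε hε T hT)
  · obtain ⟨k, hk⟩ := Set.mem_iUnion.1 hp
    exact htrans k p p hk hk ε hε T
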